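/- arXiv:1912.11728 — 4 statements merged into one kernel-verified Lean document; each statement's English description precedes it below -/
import Mathlib

section
/- Let α > 1 be a real number. There exists a constant c > 0, depending only on α, such that for every positive natural number d and all vectors D, Δ ∈ ℝ^d with D ≠ 0 and ‖Δ‖ ≤ ‖D‖/2, one has ‖D + Δ‖^α ≥ ‖D‖^α + α‖D‖^{α−2}⟨D, Δ⟩ + c‖D‖^{α−2}‖Δ‖². (This is the small-increment case of the second-order Taylor lower bound for the function x ↦ ‖x‖^α.) -/
open scoped RealInnerProductSpace

/-!
By homogeneity we may take `D = e` a unit vector, with increment `‖δ‖ ≤ K`. With `x = ‖e + δ‖` we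
have `2⟪e, δ⟫ = x² - 1 - ‖δ‖²` and `(x - 1)² ≤ ‖δ‖²`, so for `c ≤ α / 2` the claim follows from the
scalar inequality `1 + α (x - 1) + c (x - 1)² ≤ x ^ α`. For `α ≥ 2` and `c = α / 2` that is
Bernoulli's inequality for `(x²) ^ (α / 2)`. For `1 < α ≤ 2`, Bernoulli's inequality for
`x ^ (2 - α)` gives `x² ≤ x ^ α (1 + (2 - α) (x - 1))`, and dividing produces the remainder
`(α - 1)² (x - 1)² / (1 + (2 - α) (x - 1))`, whose denominator is at most `1 + K`.
The constant `min 1 (α - 1) ^ 2 / (1 + K)` serves both ranges of `α`.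
-/

section Scalar

variable {α x K : ℝ}

lemma one_add_mul_sub_one_add_half_mul_sq_le_rpow (hα : 2 ≤ α) (hx : 0 ≤ x) :
    1 + α * (x - 1) + α / 2 * (x - 1) ^ 2 ≤ x ^ α := by
  calc 1 + α * (x - 1) + α / 2 * (x - 1) ^ 2
      = 1 + α / 2 * (x ^ 2 - 1) := by ring
    _ ≤ (1 + (x ^ 2 - 1)) ^ (α / 2) :=
        one_add_mul_self_le_rpow_one_add (by linarith [sq_nonneg x]) (by linarith)
    _ = (x ^ (2 : ℝ)) ^ (α / 2) := by rw [add_sub_cancel, Real.rpow_two]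
    _ = x ^ α := by rw [← Real.rpow_mul hx, mul_div_cancel₀ α two_ne_zero]

lemma sq_le_rpow_mul_one_add_mul_sub_one (hα : 1 ≤ α) (hα₂ : α ≤ 2) (hx : 0 ≤ x) :
    x ^ 2 ≤ x ^ α * (1 + (2 - α) * (x - 1)) := by
  have bernoulli : x ^ (2 - α) ≤ 1 + (2 - α) * (x - 1) := by
    simpa only [add_sub_cancel] using
      rpow_one_add_le_one_add_mul_self (s := x - 1) (p := 2 - α)
        (by linarith) (by linarith) (by linarith)
  calc x ^ 2 = x ^ α * x ^ (2 - α) := by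
        rw [← Real.rpow_add_of_nonneg hx (by linarith) (by linarith), add_sub_cancel,
          Real.rpow_two]
    _ ≤ x ^ α * (1 + (2 - α) * (x - 1)) := by gcongr

lemma one_add_mul_sub_one_add_sq_div_mul_sq_le_rpow (hα : 1 < α) (hα₂ : α ≤ 2) (hx : 0 ≤ x)
    (hK : 0 ≤ K) (hxK : x ≤ 1 + K) :
    1 + α * (x - 1) + (α - 1) ^ 2 / (1 + K) * (x - 1) ^ 2 ≤ x ^ α := by
  set m := 1 + (2 - α) * (x - 1) with hm
  have m_pos : 0 < m := by nlinarith
  have m_le : m ≤ 1 + K := by nlinarith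
  calc 1 + α * (x - 1) + (α - 1) ^ 2 / (1 + K) * (x - 1) ^ 2
      ≤ 1 + α * (x - 1) + (α - 1) ^ 2 / m * (x - 1) ^ 2 := by gcongr
    _ = x ^ 2 / m := by
        field_simp
        rw [hm]
        ring
    _ ≤ x ^ α :=
        (div_le_iff₀ m_pos).2 (sq_le_rpow_mul_one_add_mul_sub_one hα.le hα₂ hx)

lemma min_sq_div_one_add_le_half (hα : 1 < α) (hK : 0 ≤ K) :
    min 1 (α - 1) ^ 2 / (1 + K) ≤ α / 2 := by
  have min_nonneg : 0 ≤ min 1 (α - 1) := le_min zero_le_one (by linarith)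
  calc min 1 (α - 1) ^ 2 / (1 + K) ≤ min 1 (α - 1) ^ 2 :=
        div_le_self (sq_nonneg _) (by linarith)
    _ ≤ α / 2 := by nlinarith only [min_nonneg, min_le_left 1 (α - 1), min_le_right 1 (α - 1)]

lemma one_add_mul_sub_one_add_min_sq_div_mul_sq_le_rpow (hα : 1 < α) (hx : 0 ≤ x) (hK : 0 ≤ K)
    (hxK : x ≤ 1 + K) :
    1 + α * (x - 1) + min 1 (α - 1) ^ 2 / (1 + K) * (x - 1) ^ 2 ≤ x ^ α := by
  rcases le_total α 2 with hα₂ | hα₂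
  · rw [min_eq_right (by linarith)]
    exact one_add_mul_sub_one_add_sq_div_mul_sq_le_rpow hα hα₂ hx hK hxK
  · have coeff_le := min_sq_div_one_add_le_half hα hK
    calc 1 + α * (x - 1) + min 1 (α - 1) ^ 2 / (1 + K) * (x - 1) ^ 2
        ≤ 1 + α * (x - 1) + α / 2 * (x - 1) ^ 2 := by gcongr
      _ ≤ x ^ α := one_add_mul_sub_one_add_half_mul_sq_le_rpow hα₂ hx

end Scalar

section InnerProductSpace

variable {E : Type*} [NormedAddCommGroup E] [InnerProductSpace ℝ E] {α c K : ℝ}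

lemma one_add_mul_inner_add_mul_norm_sq_le_of_norm_eq_one {e : E} (he : ‖e‖ = 1) (hc : c ≤ α / 2)
    (δ : E) :
    1 + α * ⟪e, δ⟫ + c * ‖δ‖ ^ 2 ≤
      1 + α * (‖e + δ‖ - 1) + c * (‖e + δ‖ - 1) ^ 2 := by
  have norm_sq : ‖e + δ‖ ^ 2 = 1 + 2 * ⟪e, δ⟫ + ‖δ‖ ^ 2 := by
    rw [norm_add_sq_real, he, one_pow]
  have sub_one_sq_le : (‖e + δ‖ - 1) ^ 2 ≤ ‖δ‖ ^ 2 := by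
    rw [sq_le_sq, abs_norm, ← he]
    simpa only [add_sub_cancel_left] using abs_norm_sub_norm_le (e + δ) e
  have := mul_nonneg (sub_nonneg.2 hc) (sub_nonneg.2 sub_one_sq_le)
  linear_combination this - α / 2 * norm_sq

lemma one_add_mul_inner_add_min_sq_div_mul_norm_sq_le_norm_add_rpow (hα : 1 < α) {e δ : E}
    (he : ‖e‖ = 1) (hδ : ‖δ‖ ≤ K) :
    1 + α * ⟪e, δ⟫ + min 1 (α - 1) ^ 2 / (1 + K) * ‖δ‖ ^ 2 ≤ ‖e + δ‖ ^ α := by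
  have hK : 0 ≤ K := (norm_nonneg δ).trans hδ
  have norm_le : ‖e + δ‖ ≤ 1 + K := (norm_add_le e δ).trans (by rw [he]; gcongr)
  exact (one_add_mul_inner_add_mul_norm_sq_le_of_norm_eq_one he
    (min_sq_div_one_add_le_half hα hK) δ).trans
    (one_add_mul_sub_one_add_min_sq_div_mul_sq_le_rpow hα (norm_nonneg _) hK norm_le)

theorem stmt_3_general (hα : 1 < α) {D Δ : E} (hD : D ≠ 0) (hΔ : ‖Δ‖ ≤ K * ‖D‖) :
    ‖D‖ ^ α + α * ‖D‖ ^ (α - 2) * ⟪D, Δ⟫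
      + min 1 (α - 1) ^ 2 / (1 + K) * ‖D‖ ^ (α - 2) * ‖Δ‖ ^ 2 ≤ ‖D + Δ‖ ^ α := by
  have hr : 0 < ‖D‖ := norm_pos_iff.2 hD
  set r := ‖D‖
  have norm_smul_inv (v : E) : ‖r⁻¹ • v‖ = ‖v‖ / r := by
    rw [norm_smul, norm_inv, Real.norm_of_nonneg hr.le, inv_mul_eq_div]
  have unit_bound : 1 + α * ⟪r⁻¹ • D, r⁻¹ • Δ⟫
      + min 1 (α - 1) ^ 2 / (1 + K) * ‖r⁻¹ • Δ‖ ^ 2 ≤ ‖r⁻¹ • D + r⁻¹ • Δ‖ ^ α :=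
    one_add_mul_inner_add_min_sq_div_mul_norm_sq_le_norm_add_rpow hα
      (by rw [norm_smul_inv, div_self hr.ne']) (by rwa [norm_smul_inv, div_le_iff₀ hr])
  rw [← smul_add, norm_smul_inv, norm_smul_inv, real_inner_smul_left, real_inner_smul_right,
    Real.div_rpow (norm_nonneg _) hr.le, le_div_iff₀ (Real.rpow_pos_of_pos hr α)] at unit_bound
  have rpow_split : r ^ α = r ^ (α - 2) * r ^ 2 := by
    rw [← Real.rpow_add_natCast hr.ne', Nat.cast_ofNat, sub_add_cancel]
  refine le_of_eq_of_le ?_ unit_bound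
  rw [rpow_split]
  field_simp

end InnerProductSpace

/-- Small-increment second-order Taylor lower bound for `x ↦ ‖x‖^α`, `α > 1`:
for `‖Δ‖ ≤ ‖D‖/2`,
`‖D + Δ‖^α ≥ ‖D‖^α + α ‖D‖^(α-2) ⟪D, Δ⟫ + c ‖D‖^(α-2) ‖Δ‖²`. -/
theorem stmt_3 (α : ℝ) (hα : 1 < α) :
    ∃ c > (0 : ℝ), ∀ (d : ℕ), 0 < d →
      ∀ (D Δ : EuclideanSpace ℝ (Fin d)), D ≠ 0 → ‖Δ‖ ≤ ‖D‖ / 2 →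
        ‖D + Δ‖ ^ α ≥ ‖D‖ ^ α + α * ‖D‖ ^ (α - 2) * ⟪D, Δ⟫
          + c * ‖D‖ ^ (α - 2) * ‖Δ‖ ^ 2 := by
  have min_pos : 0 < min 1 (α - 1) := lt_min one_pos (sub_pos.2 hα)
  exact ⟨min 1 (α - 1) ^ 2 / (1 + 1 / 2), div_pos (pow_pos min_pos 2) (by norm_num),
    fun _ _ _ _ hD hΔ => stmt_3_general hα hD (by linarith)⟩
end

section
/- Let α > 1 be a real number. There exists a constant c > 0, depending only on α, such that for every positive natural number d and all vectors D, Δ ∈ ℝ^d with D ≠ 0 and ‖Δ‖ > ‖D‖/2, one has ‖D + Δ‖^α ≥ ‖D‖^α + α‖D‖^{α−2}⟨D, Δ⟩ + c‖Δ‖^α. (This is the large-increment case of the second-order Taylor lower bound for the function x ↦ ‖x‖^α.) -/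
open scoped RealInnerProductSpace

/-!
By homogeneity one may take `Δ` to be a unit vector. The Taylor remainder of `‖·‖ ^ α` at `D` in
the direction `Δ` then depends only on `r = ‖D‖`, which stays in a bounded interval, and on the
cosine `k` of the angle between `D` and `Δ`. With `s = ‖D + Δ‖ = √(r ^ 2 + 2 r k + 1)`, strict
convexity of `x ↦ x ^ α` gives `s ^ α ≥ r ^ α + α r ^ (α - 1) (s - r)`, and `s ≥ r + k` by the
Cauchy-Schwarz inequality. The two inequalities are never equalities at once, so the remainder is
a positive continuous function on a compact rectangle and hence bounded below by a positive
constant.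
-/

open InnerProductGeometry Set

universe u

theorem rpow_add_mul_rpow_sub_one_mul_lt_rpow {α r s : ℝ} (hα : 1 < α) (hr : 0 ≤ r) (hs : 0 ≤ s)
    (hsr : s ≠ r) : r ^ α + α * r ^ (α - 1) * (s - r) < s ^ α := by
  rcases hr.eq_or_lt with rfl | hr
  · rw [Real.zero_rpow (by linarith), Real.zero_rpow (by linarith)]
    simpa using Real.rpow_pos_of_pos (hs.lt_of_ne' hsr) α
  · have bernoulli : 1 + α * (s / r - 1) < (1 + (s / r - 1)) ^ α :=
      one_add_mul_self_lt_rpow_one_add (by linarith [div_nonneg hs hr.le])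
        (by rwa [sub_ne_zero, Ne, div_eq_one_iff_eq hr.ne']) hα
    rw [add_sub_cancel, Real.div_rpow hs hr.le, lt_div_iff₀ (Real.rpow_pos_of_pos hr α)]
      at bernoulli
    calc r ^ α + α * r ^ (α - 1) * (s - r) = (1 + α * (s / r - 1)) * r ^ α := by
          rw [Real.rpow_sub_one hr.ne']
          field_simp
      _ < s ^ α := bernoulli

/-- The first-order Taylor remainder `‖D + e‖ ^ α - ‖D‖ ^ α - α ‖D‖ ^ (α - 2) ⟪D, e⟫` of `‖·‖ ^ α`
for a unit vector `e`, as a function of `r = ‖D‖` and the cosine `k` of the angle between `D` and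
`e`. Absorbing the factor `r` of `⟪D, e⟫ = r k` into `r ^ (α - 1)` makes it continuous at `r = 0`
when `1 ≤ α`. -/
noncomputable def unitTaylorRemainder (α r k : ℝ) : ℝ :=
  √(r ^ 2 + 2 * r * k + 1) ^ α - r ^ α - α * r ^ (α - 1) * k

theorem unitTaylorRemainder_pos {α r k : ℝ} (hα : 1 < α) (hr : 0 ≤ r) (hk : k ∈ Icc (-1) 1) :
    0 < unitTaylorRemainder α r k := by
  have hk_sq : k ^ 2 ≤ 1 := by nlinarith [hk.1, hk.2]
  have cauchy_schwarz : r + k ≤ √(r ^ 2 + 2 * r * k + 1) := Real.le_sqrt_of_sq_le (by linarith)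
  unfold unitTaylorRemainder
  by_cases hsr : √(r ^ 2 + 2 * r * k + 1) = r
  · have hrk : r * k < 0 := by
      have hsq := Real.sq_sqrt (show 0 ≤ r ^ 2 + 2 * r * k + 1 by nlinarith [sq_nonneg (r + k)])
      rw [hsr] at hsq
      linarith
    have hr_pos : 0 < r := hr.lt_of_ne' (left_ne_zero_of_mul hrk.ne)
    have hk_neg : k < 0 := (pos_iff_neg_of_mul_neg hrk).1 hr_pos
    have hslope : 0 < α * r ^ (α - 1) := by positivity
    rw [hsr]
    linarith [mul_neg_of_pos_of_neg hslope hk_neg]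
  · have tangent := rpow_add_mul_rpow_sub_one_mul_lt_rpow hα hr (Real.sqrt_nonneg _) hsr
    have hslope : 0 ≤ α * r ^ (α - 1) := by positivity
    linarith [mul_le_mul_of_nonneg_left (le_sub_iff_add_le'.2 cauchy_schwarz) hslope]

theorem continuous_unitTaylorRemainder {α : ℝ} (hα : 1 ≤ α) :
    Continuous fun p : ℝ × ℝ ↦ unitTaylorRemainder α p.1 p.2 := by
  have hα₀ : 0 ≤ α := by linarith
  have hα₁ : 0 ≤ α - 1 := by linarith
  unfold unitTaylorRemainder
  fun_prop (disch := first | assumption | simp [*])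

theorem exists_pos_forall_le_unitTaylorRemainder {α : ℝ} (hα : 1 < α) (K : ℝ) :
    ∃ c > 0, ∀ r ∈ Icc 0 K, ∀ k ∈ Icc (-1) 1, c ≤ unitTaylorRemainder α r k := by
  obtain ⟨c, hc, hle⟩ := (isCompact_Icc.prod isCompact_Icc).exists_forall_le'
    (continuous_unitTaylorRemainder hα.le).continuousOn
    fun p (hp : p ∈ Icc 0 K ×ˢ Icc (-1) 1) ↦ unitTaylorRemainder_pos hα hp.1.1 hp.2
  exact ⟨c, hc, fun r hr k hk ↦ hle (r, k) ⟨hr, hk⟩⟩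

section InnerProductSpace

variable {E : Type*} [NormedAddCommGroup E] [InnerProductSpace ℝ E]

theorem norm_add_eq_norm_mul_sqrt (x : E) {y : E} (hy : y ≠ 0) :
    ‖x + y‖ = ‖y‖ * √((‖x‖ / ‖y‖) ^ 2 + 2 * (‖x‖ / ‖y‖) * Real.cos (angle x y) + 1) := by
  have hy' : ‖y‖ ≠ 0 := norm_ne_zero_iff.2 hy
  have law_of_cosines : ‖x + y‖ ^ 2
      = ‖y‖ ^ 2 * ((‖x‖ / ‖y‖) ^ 2 + 2 * (‖x‖ / ‖y‖) * Real.cos (angle x y) + 1) := by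
    rw [norm_add_sq_real, ← cos_angle_mul_norm_mul_norm]
    field_simp
  rw [← Real.sqrt_sq (norm_nonneg (x + y)), law_of_cosines, Real.sqrt_mul (sq_nonneg _),
    Real.sqrt_sq (norm_nonneg y)]

theorem norm_add_rpow_eq_taylor_add_remainder (α : ℝ) (x : E) {y : E} (hy : y ≠ 0) :
    ‖x + y‖ ^ α = ‖x‖ ^ α + α * ‖x‖ ^ (α - 2) * ⟪x, y⟫
      + unitTaylorRemainder α (‖x‖ / ‖y‖) (Real.cos (angle x y)) * ‖y‖ ^ α := by
  have hy' : 0 < ‖y‖ := norm_pos_iff.2 hy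
  have linear_term : ‖x‖ ^ (α - 2) * ⟪x, y⟫
      = (‖x‖ / ‖y‖) ^ (α - 1) * Real.cos (angle x y) * ‖y‖ ^ α := by
    rcases eq_or_ne x 0 with rfl | hx
    · simp
    have hx' : 0 < ‖x‖ := norm_pos_iff.2 hx
    rw [← cos_angle_mul_norm_mul_norm, Real.div_rpow hx'.le hy'.le, Real.rpow_sub_one hy'.ne',
      show α - 1 = α - 2 + 1 by ring, Real.rpow_add_one hx'.ne']
    field_simp
  have constant_term : ‖x‖ ^ α = (‖x‖ / ‖y‖) ^ α * ‖y‖ ^ α := by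
    rw [← Real.mul_rpow (by positivity) hy'.le, div_mul_cancel₀ _ hy'.ne']
  rw [mul_assoc, linear_term, constant_term, norm_add_eq_norm_mul_sqrt x hy,
    Real.mul_rpow hy'.le (Real.sqrt_nonneg _), unitTaylorRemainder]
  ring

end InnerProductSpace

theorem stmt_4_general {α : ℝ} (hα : 1 < α) (K : ℝ) :
    ∃ c > (0 : ℝ), ∀ (E : Type u) [NormedAddCommGroup E] [InnerProductSpace ℝ E] (D Δ : E),
      ‖D‖ ≤ K * ‖Δ‖ →
        ‖D‖ ^ α + α * ‖D‖ ^ (α - 2) * ⟪D, Δ⟫ + c * ‖Δ‖ ^ α ≤ ‖D + Δ‖ ^ α := by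
  obtain ⟨c, hc, hle⟩ := exists_pos_forall_le_unitTaylorRemainder hα K
  refine ⟨c, hc, fun E _ _ D Δ hDΔ ↦ ?_⟩
  rcases eq_or_ne Δ 0 with rfl | hΔ
  · simp [Real.zero_rpow (zero_lt_one.trans hα).ne']
  · have hratio : ‖D‖ / ‖Δ‖ ∈ Icc 0 K :=
      ⟨by positivity, (div_le_iff₀ (norm_pos_iff.2 hΔ)).2 hDΔ⟩
    rw [norm_add_rpow_eq_taylor_add_remainder α D hΔ]
    gcongr
    exact hle _ hratio _ (Real.cos_mem_Icc _)

/-- Large-increment second-order Taylor lower bound for `x ↦ ‖x‖^α`, `α > 1`: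
for `‖Δ‖ > ‖D‖/2`,
`‖D + Δ‖^α ≥ ‖D‖^α + α ‖D‖^(α-2) ⟪D, Δ⟫ + c ‖Δ‖^α`. -/
theorem stmt_4 (α : ℝ) (hα : 1 < α) :
    ∃ c > (0 : ℝ), ∀ (d : ℕ), 0 < d →
      ∀ (D Δ : EuclideanSpace ℝ (Fin d)), D ≠ 0 → ‖Δ‖ > ‖D‖ / 2 →
        ‖D + Δ‖ ^ α ≥ ‖D‖ ^ α + α * ‖D‖ ^ (α - 2) * ⟪D, Δ⟫
          + c * ‖Δ‖ ^ α := by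
  obtain ⟨c, hc, hle⟩ := stmt_4_general hα 2
  exact ⟨c, hc, fun d _ D Δ _ hΔ ↦ hle _ D Δ (by linarith)⟩
end

section
/- Let α > 1 be a real number. There exists a constant c > 0, depending only on α, such that the following holds for every positive natural number d, every natural number N, every D ∈ ℝ^d with D ≠ 0, and every family Δ : Fin N → ℝ^d satisfying ∑_j Δ_j = 0: ∑_j ‖D + Δ_j‖^α ≥ N‖D‖^α + c · ∑_j (‖D‖^{α−2}‖Δ_j‖² · 1{‖Δ_j‖ ≤ ‖D‖/2} + ‖Δ_j‖^α · 1{‖Δ_j‖ > ‖D‖/2}). (The linear terms of the Taylor expansion sum to zero because ∑_j Δ_j = 0.) -/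
/-!
By homogeneity take `‖D‖ = 1`, and write `r = ‖D + Δ‖`, `t = ⟪D, Δ⟫`. The identity
`‖Δ‖² = (r - 1)² + 2 (r - 1 - t)`, in which `r - 1 - t ≥ 0` by Cauchy–Schwarz, splits
`r ^ α - 1 - α t` as `(r ^ α - 1 - α (r - 1)) + α (r - 1 - t)`. For bounded `Δ` Bernoulli's
inequality bounds the first part below by a multiple of `(r - 1)²`, so the whole is at least a
multiple of `‖Δ‖²`. For large `Δ` the linear term is negligible against `‖Δ‖ ^ α`, because `α > 1`.
Summing over `j` kills the linear terms.
-/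

open scoped RealInnerProductSpace

/-- The size of the second-order Taylor remainder of `x ↦ ‖x‖ ^ p` at a point of norm `a` for an
increment of norm `b`: quadratic in `b` for `b ≤ a / 2`, of order `b ^ p` beyond. -/
noncomputable def powRemainder (p a b : ℝ) : ℝ :=
  if b ≤ a / 2 then a ^ (p - 2) * b ^ 2 else b ^ p

/-- A coefficient of strong convexity of `r ↦ r ^ p` at the base point `1`, valid for
`r ∈ [0, R]`. -/
noncomputable def rpowConvexityCoeff (p R : ℝ) : ℝ :=
  min (p / 2) ((p - 1) ^ 2 / R)

section Scalar

variable {p r R : ℝ}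

theorem rpowConvexityCoeff_pos (hp : 1 < p) (hR : 0 < R) : 0 < rpowConvexityCoeff p R :=
  lt_min (by linarith) (div_pos (pow_pos (sub_pos.2 hp) 2) hR)

-- Bernoulli's inequality for `r ^ p = (r ^ 2) ^ (p / 2)`.
theorem quadratic_le_rpow_of_two_le (hp : 2 ≤ p) (hr : 0 ≤ r) :
    1 + p * (r - 1) + p / 2 * (r - 1) ^ 2 ≤ r ^ p := by
  have bernoulli : 1 + p / 2 * (r ^ 2 - 1) ≤ (1 + (r ^ 2 - 1)) ^ (p / 2) :=
    one_add_mul_self_le_rpow_one_add (by linarith [sq_nonneg r]) (by linarith)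
  calc 1 + p * (r - 1) + p / 2 * (r - 1) ^ 2 = 1 + p / 2 * (r ^ 2 - 1) := by ring
    _ ≤ (1 + (r ^ 2 - 1)) ^ (p / 2) := bernoulli
    _ = r ^ p := by
      rw [add_sub_cancel, ← Real.rpow_natCast_mul hr, Nat.cast_ofNat, mul_div_cancel₀ p two_ne_zero]

theorem sq_le_mul_rpow (hp₁ : 1 ≤ p) (hp₂ : p ≤ 2) (hr : 0 ≤ r) :
    r ^ 2 ≤ (1 + (2 - p) * (r - 1)) * r ^ p := by
  have bernoulli : (1 + (r - 1)) ^ (2 - p) ≤ 1 + (2 - p) * (r - 1) :=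
    rpow_one_add_le_one_add_mul_self (by linarith) (by linarith) (by linarith)
  rw [add_sub_cancel] at bernoulli
  calc r ^ 2 = r ^ (2 - p) * r ^ p := by
        rw [← Real.rpow_add' hr (by simp), sub_add_cancel, Real.rpow_two]
    _ ≤ (1 + (2 - p) * (r - 1)) * r ^ p := by gcongr

theorem quadratic_le_rpow_of_le_two (hp₁ : 1 < p) (hp₂ : p ≤ 2) (hR : 1 ≤ R) (hr : 0 ≤ r)
    (hrR : r ≤ R) : 1 + p * (r - 1) + (p - 1) ^ 2 / R * (r - 1) ^ 2 ≤ r ^ p := by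
  set q := 1 + (2 - p) * (r - 1) with hq
  have hq_pos : 0 < q := by nlinarith
  have hqR : q ≤ R := by nlinarith
  calc 1 + p * (r - 1) + (p - 1) ^ 2 / R * (r - 1) ^ 2
      ≤ 1 + p * (r - 1) + (p - 1) ^ 2 / q * (r - 1) ^ 2 := by gcongr
    _ = r ^ 2 / q := by field_simp; rw [hq]; ring
    _ ≤ r ^ p := (div_le_iff₀' hq_pos).2 (sq_le_mul_rpow hp₁.le hp₂ hr)

theorem quadratic_le_rpow (hp : 1 < p) (hR : 1 ≤ R) (hr : 0 ≤ r) (hrR : r ≤ R) :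
    1 + p * (r - 1) + rpowConvexityCoeff p R * (r - 1) ^ 2 ≤ r ^ p := by
  rcases le_total p 2 with hp₂ | hp₂
  · refine le_trans ?_ (quadratic_le_rpow_of_le_two hp hp₂ hR hr hrR)
    gcongr
    exact min_le_right _ _
  · refine le_trans ?_ (quadratic_le_rpow_of_two_le hp₂ hr)
    gcongr
    exact min_le_left _ _

theorem powRemainder_mul {l a b : ℝ} (p : ℝ) (hl : 0 < l) (ha : 0 ≤ a) (hb : 0 ≤ b) :
    powRemainder p (l * a) (l * b) = l ^ p * powRemainder p a b := by
  have hcond : l * b ≤ l * a / 2 ↔ b ≤ a / 2 := by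
    rw [mul_div_assoc, mul_le_mul_iff_right₀ hl]
  simp only [powRemainder, hcond, mul_ite]
  congr 1
  · rw [Real.mul_rpow hl.le ha, Real.rpow_sub hl, Real.rpow_two]
    field_simp
  · exact Real.mul_rpow hl.le hb

theorem powRemainder_one_le {K b : ℝ} (hp : 0 ≤ p) (hK : 1 ≤ K) (hb : 0 ≤ b) (hbK : b ≤ K) :
    powRemainder p 1 b ≤ 4 * K ^ p * b ^ 2 := by
  unfold powRemainder
  split_ifs with hsmall
  · have hKp : 1 ≤ K ^ p := Real.one_le_rpow hK hp
    rw [Real.one_rpow]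
    gcongr
    linarith
  · have hb_sq : 1 ≤ 4 * b ^ 2 := by nlinarith
    calc b ^ p ≤ K ^ p * 1 := by rw [mul_one]; gcongr
      _ ≤ K ^ p * (4 * b ^ 2) := by gcongr
      _ = 4 * K ^ p * b ^ 2 := by ring

end Scalar

section InnerProductSpace

variable {E : Type*} [NormedAddCommGroup E] [InnerProductSpace ℝ E] {p : ℝ} {e y : E}

theorem one_add_inner_le_norm_add (he : ‖e‖ = 1) (y : E) : 1 + ⟪e, y⟫ ≤ ‖e + y‖ := by
  simpa [inner_add_right, he] using real_inner_le_norm e (e + y)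

theorem norm_sq_eq_of_norm_eq_one (he : ‖e‖ = 1) (y : E) :
    ‖y‖ ^ 2 = (‖e + y‖ - 1) ^ 2 + 2 * (‖e + y‖ - 1 - ⟪e, y⟫) := by
  have expansion := norm_add_sq_real e y
  rw [he] at expansion
  linarith

theorem norm_add_rpow_ge_of_norm_le {K : ℝ} (hp : 1 < p) (he : ‖e‖ = 1) (hy : ‖y‖ ≤ K) :
    1 + p * ⟪e, y⟫ + rpowConvexityCoeff p (1 + K) * ‖y‖ ^ 2 ≤ ‖e + y‖ ^ p := by
  have hK : 0 ≤ K := (norm_nonneg y).trans hy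
  have hle : ‖e + y‖ ≤ 1 + K := (norm_add_le e y).trans (by linarith)
  have hradial := quadratic_le_rpow hp (by linarith) (norm_nonneg (e + y)) hle
  have htransverse : rpowConvexityCoeff p (1 + K) * (‖e + y‖ - 1 - ⟪e, y⟫) ≤
      p / 2 * (‖e + y‖ - 1 - ⟪e, y⟫) :=
    mul_le_mul_of_nonneg_right (min_le_left _ _)
      (by linarith [one_add_inner_le_norm_add he y])
  rw [norm_sq_eq_of_norm_eq_one he y]
  linarith

theorem norm_add_rpow_ge_of_le_norm (hp : 0 ≤ p) (he : ‖e‖ = 1) (hy : 2 ≤ ‖y‖)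
    (hgrowth : 2 ^ (p + 1) * (1 + p) ≤ ‖y‖ ^ (p - 1)) :
    1 + p * ⟪e, y⟫ + (2 ^ (p + 1))⁻¹ * ‖y‖ ^ p ≤ ‖e + y‖ ^ p := by
  have hy_pos : 0 < ‖y‖ := by linarith
  have hinner : ⟪e, y⟫ ≤ ‖y‖ := by simpa [he] using real_inner_le_norm e y
  have hhalf : ‖y‖ / 2 ≤ ‖e + y‖ := by
    have := norm_sub_le (e + y) e
    rw [add_sub_cancel_left, he] at this
    linarith
  have hlinear : 1 + p * ⟪e, y⟫ ≤ (2 ^ (p + 1))⁻¹ * ‖y‖ ^ p := by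
    rw [Real.rpow_sub_one hy_pos.ne', le_div_iff₀ hy_pos] at hgrowth
    rw [le_inv_mul_iff₀ (by positivity)]
    refine le_trans ?_ hgrowth
    rw [mul_assoc]
    gcongr
    nlinarith
  calc 1 + p * ⟪e, y⟫ + (2 ^ (p + 1))⁻¹ * ‖y‖ ^ p
      ≤ 2 * ((2 ^ (p + 1))⁻¹ * ‖y‖ ^ p) := by linarith
    _ = (‖y‖ / 2) ^ p := by
      rw [Real.div_rpow hy_pos.le zero_le_two, Real.rpow_add_one two_ne_zero]
      field_simp
    _ ≤ ‖e + y‖ ^ p := by gcongr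

end InnerProductSpace

universe u v

theorem exists_powRemainder_le_of_norm_eq_one {p : ℝ} (hp : 1 < p) :
    ∃ c > (0 : ℝ), ∀ {E : Type u} [NormedAddCommGroup E] [InnerProductSpace ℝ E] (e y : E),
      ‖e‖ = 1 → 1 + p * ⟪e, y⟫ + c * powRemainder p 1 ‖y‖ ≤ ‖e + y‖ ^ p := by
  have hgrowth := (tendsto_rpow_atTop (sub_pos.2 hp)).eventually_ge_atTop
    (2 ^ (p + 1) * (1 + p))
  obtain ⟨K, hK⟩ := Filter.eventually_atTop.1 (hgrowth.and (Filter.eventually_ge_atTop 2))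
  have hK_two : 2 ≤ K := (hK K le_rfl).2
  set m := rpowConvexityCoeff p (1 + K)
  have hm : 0 < m := rpowConvexityCoeff_pos hp (by linarith)
  have : 0 < K ^ p := Real.rpow_pos_of_pos (by linarith) p
  refine ⟨min (m / (4 * K ^ p)) (2 ^ (p + 1))⁻¹, by positivity, fun {E} _ _ e y he => ?_⟩
  rcases le_total ‖y‖ K with hy | hy
  · have hquadratic :
        min (m / (4 * K ^ p)) (2 ^ (p + 1))⁻¹ * powRemainder p 1 ‖y‖ ≤ m * ‖y‖ ^ 2 := calc
      _ ≤ min (m / (4 * K ^ p)) (2 ^ (p + 1))⁻¹ * (4 * K ^ p * ‖y‖ ^ 2) := by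
        gcongr
        exact powRemainder_one_le (by linarith) (by linarith) (norm_nonneg y) hy
      _ ≤ m / (4 * K ^ p) * (4 * K ^ p * ‖y‖ ^ 2) := by
        gcongr
        exact min_le_left _ _
      _ = m * ‖y‖ ^ 2 := by field_simp
    linarith [norm_add_rpow_ge_of_norm_le hp he hy]
  · refine le_trans ?_ (norm_add_rpow_ge_of_le_norm (by linarith) he (hK _ hy).2 (hK _ hy).1)
    rw [powRemainder, if_neg (by linarith)]
    gcongr
    exact min_le_right _ _

theorem exists_powRemainder_le {p : ℝ} (hp : 1 < p) :
    ∃ c > (0 : ℝ), ∀ {E : Type u} [NormedAddCommGroup E] [InnerProductSpace ℝ E] (x y : E),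
      x ≠ 0 → ‖x‖ ^ p + p * ‖x‖ ^ (p - 2) * ⟪x, y⟫ + c * powRemainder p ‖x‖ ‖y‖ ≤
        ‖x + y‖ ^ p := by
  obtain ⟨c, hc, hunit⟩ := exists_powRemainder_le_of_norm_eq_one.{u} hp
  refine ⟨c, hc, fun {E} _ _ x y hx => ?_⟩
  have hl : 0 < ‖x‖ := norm_pos_iff.2 hx
  obtain ⟨e, he, hxe⟩ : ∃ e : E, ‖e‖ = 1 ∧ x = ‖x‖ • e :=
    ⟨‖x‖⁻¹ • x, norm_smul_inv_norm hx, (smul_inv_smul₀ hl.ne' x).symm⟩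
  obtain ⟨z, rfl⟩ : ∃ z : E, y = ‖x‖ • z := ⟨‖x‖⁻¹ • y, (smul_inv_smul₀ hl.ne' y).symm⟩
  generalize ‖x‖ = l at *
  subst hxe
  have hnorm (w : E) : ‖l • w‖ = l * ‖w‖ := norm_smul_of_nonneg hl.le w
  calc l ^ p + p * l ^ (p - 2) * ⟪l • e, l • z⟫ + c * powRemainder p l ‖l • z‖
      = l ^ p * (1 + p * ⟪e, z⟫ + c * powRemainder p 1 ‖z‖) := by
        have hrem := powRemainder_mul p hl zero_le_one (norm_nonneg z)
        rw [mul_one] at hrem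
        rw [hnorm, hrem, real_inner_smul_left, real_inner_smul_right, Real.rpow_sub hl,
          Real.rpow_two]
        field_simp
    _ ≤ l ^ p * ‖e + z‖ ^ p := by gcongr; exact hunit e z he
    _ = ‖l • e + l • z‖ ^ p := by
      rw [← smul_add, hnorm, Real.mul_rpow hl.le (norm_nonneg _)]

theorem stmt_5_general (α : ℝ) (hα : 1 < α) :
    ∃ c > (0 : ℝ), ∀ {E : Type u} [NormedAddCommGroup E] [InnerProductSpace ℝ E] {ι : Type v}
      (s : Finset ι) (D : E), D ≠ 0 → ∀ Δ : ι → E, ∑ j ∈ s, Δ j = 0 →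
        s.card * ‖D‖ ^ α + c * ∑ j ∈ s, powRemainder α ‖D‖ ‖Δ j‖ ≤
          ∑ j ∈ s, ‖D + Δ j‖ ^ α := by
  obtain ⟨c, hc, hpointwise⟩ := exists_powRemainder_le.{u} hα
  refine ⟨c, hc, fun {E} _ _ {ι} s D hD Δ hΔ => ?_⟩
  have hlinear : ∑ j ∈ s, α * ‖D‖ ^ (α - 2) * ⟪D, Δ j⟫ = 0 := by
    rw [← Finset.mul_sum, ← inner_sum, hΔ, inner_zero_right, mul_zero]
  calc s.card * ‖D‖ ^ α + c * ∑ j ∈ s, powRemainder α ‖D‖ ‖Δ j‖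
      = ∑ j ∈ s, (‖D‖ ^ α + α * ‖D‖ ^ (α - 2) * ⟪D, Δ j⟫ + c * powRemainder α ‖D‖ ‖Δ j‖) := by
        rw [Finset.sum_add_distrib, Finset.sum_add_distrib, hlinear, add_zero, Finset.sum_const,
          nsmul_eq_mul, Finset.mul_sum]
    _ ≤ ∑ j ∈ s, ‖D + Δ j‖ ^ α := Finset.sum_le_sum fun j _ => hpointwise D (Δ j) hD

/-- Summed second-order Taylor lower bound for `x ↦ ‖x‖^α`, `α > 1`: if the
fluctuations `Δ j` sum to zero, the linear terms cancel, and
`∑ ‖D + Δ j‖^α ≥ N ‖D‖^α + c ∑ (‖D‖^(α-2) ‖Δ j‖² 1{‖Δ j‖ ≤ ‖D‖/2}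
  + ‖Δ j‖^α 1{‖Δ j‖ > ‖D‖/2})`. -/
theorem stmt_5 (α : ℝ) (hα : 1 < α) :
    ∃ c > (0 : ℝ), ∀ (d : ℕ), 0 < d → ∀ (N : ℕ)
      (D : EuclideanSpace ℝ (Fin d)), D ≠ 0 →
      ∀ (Δ : Fin N → EuclideanSpace ℝ (Fin d)), (∑ j, Δ j) = 0 →
        ∑ j, ‖D + Δ j‖ ^ α ≥ (N : ℝ) * ‖D‖ ^ α +
          c * ∑ j, (if ‖Δ j‖ ≤ ‖D‖ / 2 then ‖D‖ ^ (α - 2) * ‖Δ j‖ ^ 2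
                    else ‖Δ j‖ ^ α) := by
  obtain ⟨c, hc, h⟩ := stmt_5_general α hα
  exact ⟨c, hc, fun d _ N D hD Δ hΔ => by simpa [powRemainder] using h Finset.univ D hD Δ hΔ⟩
end

section
/- Let d be a positive natural number, α ≥ 1 and M > 0 real numbers, and L, n, K natural numbers with L ≥ 1. Let γ : ℕ → ℝ^d be a path and let k_1 < k_2 < … < k_K be natural numbers with (k_K + 1)L ≤ n, such that for every i ∈ {1, …, K} the block displacement satisfies ‖γ((k_i + 1)L) − γ(k_i L)‖ ≥ M·L. Then the passage time satisfies ∑_{j=1}^{n} ‖γ(j) − γ(j−1)‖^α ≥ K · L · M^α. (If the geodesic has at least K blocks of length L in which its displacement exceeds ML, then its passage time grows linearly in K·L with constant M^α.) -/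
/-!
By the triangle inequality the step lengths in a block with displacement at least `M * L` average
at least `M`, so by convexity of `x ↦ x ^ α` their `α`-th powers average at least `M ^ α`: the block
contributes at least `L * M ^ α`. Distinct blocks share no steps, so the contributions add up.
-/

open Finset

theorem card_mul_rpow_le_sum_rpow {ι : Type*} (s : Finset ι) {f : ι → ℝ} {α M : ℝ}
    (hα : 1 ≤ α) (hM : 0 ≤ M) (hf : ∀ i ∈ s, 0 ≤ f i) (hmean : #s * M ≤ ∑ i ∈ s, f i) :
    #s * M ^ α ≤ ∑ i ∈ s, f i ^ α := by
  obtain rfl | hs := s.eq_empty_or_nonempty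
  · simp
  have hcard : (0 : ℝ) < #s := by exact_mod_cast hs.card_pos
  refine le_of_mul_le_mul_left ?_ (Real.rpow_pos_of_pos hcard (α - 1))
  calc (#s : ℝ) ^ (α - 1) * (#s * M ^ α) = (#s * M) ^ α := by
        rw [← mul_assoc, ← Real.rpow_add_one hcard.ne', sub_add_cancel,
          Real.mul_rpow hcard.le hM]
    _ ≤ (∑ i ∈ s, f i) ^ α := by gcongr
    _ ≤ (#s : ℝ) ^ (α - 1) * ∑ i ∈ s, f i ^ α :=
        Real.rpow_sum_le_const_mul_sum_rpow_of_nonneg s hα hf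

theorem sub_mul_rpow_le_sum_Ico_dist_rpow {X : Type*} [PseudoMetricSpace X] (γ : ℕ → X)
    {α M : ℝ} (hα : 1 ≤ α) (hM : 0 ≤ M) {a b : ℕ} (hab : a ≤ b)
    (hdisp : (b - a) * M ≤ dist (γ a) (γ b)) :
    (b - a) * M ^ α ≤ ∑ j ∈ Ico a b, dist (γ j) (γ (j + 1)) ^ α := by
  have hcard : (#(Ico a b) : ℝ) = b - a := by rw [Nat.card_Ico, Nat.cast_sub hab]
  rw [← hcard] at hdisp ⊢
  exact card_mul_rpow_le_sum_rpow _ hα hM (fun _ _ ↦ dist_nonneg)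
    (hdisp.trans (dist_le_Ico_sum_dist γ hab))

theorem sum_sum_Ico_le_sum_range {R : Type*} [AddCommMonoid R] [PartialOrder R]
    [IsOrderedAddMonoid R] {f : ℕ → R} (hf : ∀ j, 0 ≤ f j) {t : ℕ → ℕ} (ht : Monotone t)
    {B : Finset ℕ} {n : ℕ} (hn : ∀ k ∈ B, t (k + 1) ≤ n) :
    ∑ k ∈ B, ∑ j ∈ Ico (t k) (t (k + 1)), f j ≤ ∑ j ∈ range n, f j := by
  have hdisj : (B : Set ℕ).PairwiseDisjoint fun k ↦ Ico (t k) (t (k + 1)) := by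
    intro k _ l _ hkl
    simpa [Function.onFun, ← disjoint_coe] using ht.pairwise_disjoint_on_Ico_succ hkl
  have hsub : B.biUnion (fun k ↦ Ico (t k) (t (k + 1))) ⊆ range n :=
    biUnion_subset.2 fun k hk j hj ↦ mem_range.2 ((mem_Ico.1 hj).2.trans_le (hn k hk))
  rw [← sum_biUnion hdisj]
  exact sum_le_sum_of_subset_of_nonneg hsub fun j _ _ ↦ hf j

theorem stmt_7_general {X : Type*} [PseudoMetricSpace X] (γ : ℕ → X) {α M : ℝ}
    (hα : 1 ≤ α) (hM : 0 ≤ M) {L n : ℕ} {B : Finset ℕ} (hn : ∀ k ∈ B, (k + 1) * L ≤ n)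
    (hdisp : ∀ k ∈ B, M * L ≤ dist (γ (k * L)) (γ ((k + 1) * L))) :
    #B * L * M ^ α ≤ ∑ j ∈ range n, dist (γ j) (γ (j + 1)) ^ α := by
  have hmono : Monotone fun k : ℕ ↦ k * L := fun _ _ h ↦ Nat.mul_le_mul_right L h
  have hlength (k : ℕ) : (((k + 1) * L : ℕ) : ℝ) - (k * L : ℕ) = L := by push_cast; ring
  have hblock : ∀ k ∈ B,
      L * M ^ α ≤ ∑ j ∈ Ico (k * L) ((k + 1) * L), dist (γ j) (γ (j + 1)) ^ α := by
    intro k hk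
    have h := sub_mul_rpow_le_sum_Ico_dist_rpow γ hα hM (hmono k.le_succ)
      (by rw [hlength, mul_comm]; exact hdisp k hk)
    rwa [hlength] at h
  calc #B * L * M ^ α = ∑ _k ∈ B, L * M ^ α := by rw [sum_const, nsmul_eq_mul, mul_assoc]
    _ ≤ ∑ k ∈ B, ∑ j ∈ Ico (k * L) ((k + 1) * L), dist (γ j) (γ (j + 1)) ^ α :=
        sum_le_sum hblock
    _ ≤ ∑ j ∈ range n, dist (γ j) (γ (j + 1)) ^ α :=
        sum_sum_Ico_le_sum_range (fun _ ↦ Real.rpow_nonneg dist_nonneg α) hmono hn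

/-- If a path `γ` has `K` disjoint blocks of length `L` (indexed by
`k 1 < ⋯ < k K`) in which its displacement exceeds `M·L`, then its passage time
over the first `n` steps is at least `K · L · M^α`. -/
theorem stmt_7 (d : ℕ) (hd : 0 < d) (α M : ℝ) (hα : 1 ≤ α) (hM : 0 < M)
    (L n K : ℕ) (hL : 1 ≤ L)
    (γ : ℕ → EuclideanSpace ℝ (Fin d)) (k : Fin K → ℕ)
    (hmono : StrictMono k)
    (hn : ∀ i, (k i + 1) * L ≤ n)
    (hdisp : ∀ i, ‖γ ((k i + 1) * L) - γ (k i * L)‖ ≥ M * (L : ℝ)) :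
    ∑ j ∈ Finset.range n, ‖γ (j + 1) - γ j‖ ^ α ≥ (K : ℝ) * (L : ℝ) * M ^ α := by
  simpa [dist_eq_norm'] using stmt_7_general γ hα hM.le (B := univ.map ⟨k, hmono.injective⟩)
    (by simpa using hn) (by simpa [dist_eq_norm'] using hdisp)
end
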